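/- Let n ≥ m ≥ r ≥ 1 be integers. There exists a constant c = c(m, n, r) > 0 such that for all real H ≥ 1 the number of m×n matrices with all entries in F(H) and of rank exactly r is at least c·H^{2nr}. -/

import Mathlib

/-- The set of rationals `a/b` in lowest terms with `|a| ≤ H` and `1 ≤ b ≤ H`. -/
def Farey (H : ℝ) : Set ℚ := {x : ℚ | |(x.num : ℝ)| ≤ H ∧ (x.den : ℝ) ≤ H}

/-!
Only the order of magnitude of `N = #F(H)` matters. A `d`-dimensional subspace of `Kⁿ` is
parametrised by some `d` of the coordinates, so it contains at most `N ^ d` vectors with entries in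
a set of size `N`. When `r` linearly independent rows are chosen one after another, the row that
follows `i < r ≤ n` others can thus be chosen in at least `N ^ n - N ^ i ≥ N ^ n / 2` ways, and
padding by zero rows produces at least `(N ^ n / 2) ^ r` matrices of rank `r`. Finally
`N ≥ H ^ 2 / 16`: since `1/2² + 1/3² + ⋯ ≤ 3/4`, at least a quarter of the pairs of integers in
`[1, H]` have no common divisor `d ≥ 2`.
-/

open Finset Module

section Grid

variable {K V ι : Type*} [Field K]

lemma exists_finset_card_eq_finrank_forall_dual_apply_eq_zero [AddCommGroup V] [Module K V]
    [FiniteDimensional K V] (f : ι → Dual K V) (hf : ∀ v, (∀ i, f i v = 0) → v = 0) :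
    ∃ J : Finset ι, #J = finrank K V ∧ ∀ v, (∀ i ∈ J, f i v = 0) → v = 0 := by
  obtain ⟨κ, a, a_inj, span_eq, indep⟩ := exists_linearIndependent' K f
  have : Finite κ := indep.finite
  have : Fintype κ := Fintype.ofFinite κ
  have coannihilator_eq_bot : (Submodule.span K (Set.range (f ∘ a))).dualCoannihilator = ⊥ := by
    rw [span_eq, ← SetLike.coe_set_eq, Submodule.coe_dualCoannihilator_span, Submodule.bot_coe]
    exact Set.eq_singleton_iff_unique_mem.2
      ⟨fun _ _ ↦ map_zero _, fun v hv ↦ hf v (Set.forall_mem_range.1 hv)⟩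
  refine ⟨univ.map ⟨a, a_inj⟩, ?_, fun v hv ↦ ?_⟩
  · have dim := Subspace.finrank_add_finrank_dualCoannihilator_eq
      (Submodule.span K (Set.range (f ∘ a)))
    rwa [coannihilator_eq_bot, finrank_bot, add_zero, finrank_span_eq_card indep, ← card_univ,
      ← card_map ⟨a, a_inj⟩] at dim
  · rw [← Submodule.mem_bot K, ← coannihilator_eq_bot, ← SetLike.mem_coe,
      Submodule.coe_dualCoannihilator_span]
    exact Set.forall_mem_range.2 fun k ↦ hv _ (by simp)

lemma exists_finset_card_eq_finrank_injOn_restrict [Finite ι] (W : Submodule K (ι → K)) :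
    ∃ J : Finset ι, #J = finrank K W ∧ Set.InjOn J.restrict (W : Set (ι → K)) := by
  obtain ⟨J, card_J, eq_zero⟩ := exists_finset_card_eq_finrank_forall_dual_apply_eq_zero
    (fun i ↦ LinearMap.proj i ∘ₗ W.subtype : ι → Dual K W)
    fun w hw ↦ Subtype.ext (funext hw)
  refine ⟨J, card_J, fun v hv w hw hvw ↦ ?_⟩
  have diff_eq_zero : (⟨v, hv⟩ - ⟨w, hw⟩ : W) = 0 :=
    eq_zero _ fun i hi ↦ sub_eq_zero.2 (congrFun hvw ⟨i, hi⟩)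
  exact congrArg Subtype.val (sub_eq_zero.1 diff_eq_zero)

variable [Fintype ι] [DecidableEq ι] (S : Finset K)

lemma card_filter_mem_submodule_le (W : Submodule K (ι → K)) [DecidablePred (· ∈ W)] :
    #{v ∈ Fintype.piFinset fun _ : ι ↦ S | v ∈ W} ≤ #S ^ finrank K W := by
  obtain ⟨J, card_J, inj⟩ := exists_finset_card_eq_finrank_injOn_restrict W
  calc #{v ∈ Fintype.piFinset fun _ : ι ↦ S | v ∈ W}
      ≤ #(Fintype.piFinset fun _ : J ↦ S) := by
        refine card_le_card_of_injOn J.restrict (fun v hv ↦ ?_) (inj.mono fun v hv ↦ ?_)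
        all_goals simp_all
    _ = #S ^ finrank K W := by simp [card_J]

open scoped Classical in
/-- The linearly independent `k`-tuples of vectors in `ι → K` with all entries in `S`: the possible
nonzero rows of a rank `k` matrix over `S` whose remaining rows vanish. -/
noncomputable def indepTuples (ι : Type*) [Fintype ι] [DecidableEq ι] (S : Finset K) (k : ℕ) :
    Finset (Fin k → ι → K) :=
  {v ∈ Fintype.piFinset fun _ ↦ Fintype.piFinset fun _ ↦ S | LinearIndependent K v}

variable {S}

lemma mem_indepTuples {k : ℕ} {v : Fin k → ι → K} :
    v ∈ indepTuples ι S k ↔ (∀ i j, v i j ∈ S) ∧ LinearIndependent K v := by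
  simp [indepTuples]

lemma card_indepTuples_mul_le_card_succ (k : ℕ) :
    #(indepTuples ι S k) * (#S ^ Fintype.card ι - #S ^ k) ≤ #(indepTuples ι S (k + 1)) := by
  classical
  let extensions (v : Fin k → ι → K) : Finset (ι → K) :=
    {x ∈ Fintype.piFinset fun _ ↦ S | x ∉ Submodule.span K (Set.range v)}
  have card_extensions (v) (hv : v ∈ indepTuples ι S k) :
      #S ^ Fintype.card ι - #S ^ k ≤ #(extensions v) := by
    have dim : finrank K (Submodule.span K (Set.range v)) = k := by
      simpa using finrank_span_eq_card (mem_indepTuples.1 hv).2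
    have in_span := card_filter_mem_submodule_le S (Submodule.span K (Set.range v))
    have total := card_filter_add_card_filter_not (s := Fintype.piFinset fun _ : ι ↦ S)
      (· ∈ Submodule.span K (Set.range v))
    rw [dim] at in_span
    simp only [Fintype.card_piFinset, prod_const, card_univ] at total
    simp only [extensions]
    omega
  calc #(indepTuples ι S k) * (#S ^ Fintype.card ι - #S ^ k)
      ≤ ∑ v ∈ indepTuples ι S k, #(extensions v) := card_nsmul_le_sum _ _ _ card_extensions
    _ = #((indepTuples ι S k).sigma extensions) := (card_sigma _ _).symm
    _ ≤ #(indepTuples ι S (k + 1)) := by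
      refine card_le_card_of_injOn (fun p ↦ Fin.cons p.2 p.1) ?_ ?_
      · rintro ⟨v, x⟩ hvx
        simp_all [extensions, mem_indepTuples, linearIndependent_finCons, Fin.forall_fin_succ]
      · rintro ⟨v, x⟩ - ⟨v', x'⟩ - h
        obtain ⟨rfl, rfl⟩ := Fin.cons_injective2 h
        rfl

lemma card_pow_le_two_pow_mul_card_indepTuples (hS : S.Nontrivial) {k : ℕ}
    (hk : k ≤ Fintype.card ι) :
    #S ^ (Fintype.card ι * k) ≤ 2 ^ k * #(indepTuples ι S k) := by
  induction k with
  | zero => simp [indepTuples]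
  | succ k ih =>
    have half : #S ^ Fintype.card ι ≤ 2 * (#S ^ Fintype.card ι - #S ^ k) := by
      have : 2 * #S ^ k ≤ #S ^ Fintype.card ι := calc
        2 * #S ^ k ≤ #S * #S ^ k := Nat.mul_le_mul_right _ (one_lt_card_iff_nontrivial.2 hS)
        _ = #S ^ (k + 1) := (pow_succ' _ _).symm
        _ ≤ #S ^ Fintype.card ι := Nat.pow_le_pow_right hS.nonempty.card_pos hk
      omega
    calc #S ^ (Fintype.card ι * (k + 1))
        = #S ^ (Fintype.card ι * k) * #S ^ Fintype.card ι := by ring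
      _ ≤ (2 ^ k * #(indepTuples ι S k)) * (2 * (#S ^ Fintype.card ι - #S ^ k)) :=
        Nat.mul_le_mul (ih (by omega)) half
      _ = 2 ^ (k + 1) * (#(indepTuples ι S k) * (#S ^ Fintype.card ι - #S ^ k)) := by ring
      _ ≤ 2 ^ (k + 1) * #(indepTuples ι S (k + 1)) :=
        Nat.mul_le_mul_left _ (card_indepTuples_mul_le_card_succ k)

end Grid

section Rank

variable {K m n κ : Type*} [Field K] [Fintype n]

lemma rank_of_extend_zero [Finite m] [Fintype κ] {e : κ → m} (he : Function.Injective e)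
    {v : κ → n → K} (hv : LinearIndependent K v) :
    (Matrix.of (Function.extend e v 0)).rank = Fintype.card κ := by
  have span_eq : Submodule.span K (Set.range (Function.extend e v 0)) =
      Submodule.span K (Set.range v) := by
    refine le_antisymm (Submodule.span_le.2 ?_) (Submodule.span_mono ?_)
    · rintro _ ⟨i, rfl⟩
      by_cases hi : ∃ l, e l = i
      · obtain ⟨l, rfl⟩ := hi
        exact Submodule.subset_span ⟨l, (he.extend_apply v 0 l).symm⟩
      · rw [Function.extend_apply' _ _ i hi]
        exact Submodule.zero_mem _
    · rintro _ ⟨l, rfl⟩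
      exact ⟨e l, he.extend_apply v 0 l⟩
  calc (Matrix.of (Function.extend e v 0)).rank
      = finrank K (Submodule.span K (Set.range (Function.extend e v 0))) :=
        Matrix.rank_eq_finrank_span_row _
    _ = Fintype.card κ := by rw [span_eq, finrank_span_eq_card hv]

variable [Fintype m]

lemma card_indepTuples_le_ncard_rank_eq [DecidableEq n] {S : Finset K} (h0 : 0 ∈ S) {r : ℕ}
    (hr : r ≤ Fintype.card m) :
    #(indepTuples n S r) ≤ {A : Matrix m n K | (∀ i j, A i j ∈ S) ∧ A.rank = r}.ncard := by
  obtain ⟨e⟩ : Nonempty (Fin r ↪ m) := Function.Embedding.nonempty_of_card_le (by simpa using hr)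
  have finite : {A : Matrix m n K | (∀ i j, A i j ∈ S) ∧ A.rank = r}.Finite :=
    (Set.Finite.pi' fun _ ↦ Set.Finite.pi' fun _ ↦ S.finite_toSet).subset fun _ hA ↦ hA.1
  rw [← Set.ncard_coe_finset]
  refine Set.ncard_le_ncard_of_injOn (fun v ↦ Matrix.of (Function.extend e v (0 : m → n → K)))
    (fun v hv ↦ ?_) ?_ finite
  · obtain ⟨v_mem, indep⟩ := mem_indepTuples.1 hv
    refine ⟨fun i j ↦ ?_, by simpa using rank_of_extend_zero e.injective indep⟩
    by_cases hi : ∃ l, e l = i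
    · obtain ⟨l, rfl⟩ := hi
      simpa [e.injective.extend_apply] using v_mem l j
    · simpa [Function.extend_apply' _ _ i hi] using h0
  · exact (Matrix.of.injective.comp (Function.extend_injective e.injective _)).injOn

lemma ncard_pow_le_two_pow_mul_ncard_rank_eq {S : Set K} (hS : S.Finite) (hS' : S.Nontrivial)
    (h0 : 0 ∈ S) {r : ℕ} (hm : r ≤ Fintype.card m) (hn : r ≤ Fintype.card n) :
    S.ncard ^ (Fintype.card n * r) ≤
      2 ^ r * {A : Matrix m n K | (∀ i j, A i j ∈ S) ∧ A.rank = r}.ncard := by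
  classical
  lift S to Finset K using hS
  rw [Set.ncard_coe_finset]
  exact (card_pow_le_two_pow_mul_card_indepTuples hS' hn).trans
    (Nat.mul_le_mul_left _ (card_indepTuples_le_ncard_rank_eq h0 hm))

end Rank

section Farey

lemma sum_Icc_two_inv_sq_le (N : ℕ) : ∑ d ∈ Icc 2 N, ((d : ℝ) ^ 2)⁻¹ ≤ 3 / 4 := by
  rcases lt_or_ge N 2 with hN | hN
  · rw [Icc_eq_empty (by omega), sum_empty]
    norm_num
  · have tail := sum_Ioc_inv_sq_le_sub (α := ℝ) two_ne_zero hN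
    have : (0 : ℝ) ≤ (N : ℝ)⁻¹ := by positivity
    rw [← Ioc_insert_left hN, sum_insert left_notMem_Ioc]
    push_cast at tail ⊢
    linarith

/-- The coprime pairs of integers in `[1, N]`: they are the numerators and denominators of the
positive elements of `Farey N`, so their number bounds the size of `Farey N` from below. -/
def coprimePairs (N : ℕ) : Finset (ℕ × ℕ) :=
  {p ∈ Ioc 0 N ×ˢ Ioc 0 N | p.1.Coprime p.2}

lemma sq_le_card_coprimePairs_add_sum (N : ℕ) :
    N ^ 2 ≤ #(coprimePairs N) + ∑ d ∈ Icc 2 N, (N / d) ^ 2 := by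
  have cover : Ioc 0 N ×ˢ Ioc 0 N ⊆ coprimePairs N ∪
      (Icc 2 N).biUnion fun d ↦ {a ∈ Ioc 0 N | d ∣ a} ×ˢ {b ∈ Ioc 0 N | d ∣ b} := by
    rintro ⟨a, b⟩ hab
    obtain ⟨ha, hb⟩ := mem_product.1 hab
    have gcd_pos : 0 < a.gcd b := Nat.gcd_pos_of_pos_left b (mem_Ioc.1 ha).1
    have gcd_le : a.gcd b ≤ N := (Nat.gcd_le_left b (mem_Ioc.1 ha).1).trans (mem_Ioc.1 ha).2
    by_cases coprime : a.Coprime b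
    · exact mem_union_left _ (mem_filter.2 ⟨hab, coprime⟩)
    · have gcd_ne_one : a.gcd b ≠ 1 := coprime
      refine mem_union_right _ (mem_biUnion.2 ⟨a.gcd b, mem_Icc.2 ⟨by omega, gcd_le⟩, ?_⟩)
      exact mem_product.2 ⟨mem_filter.2 ⟨ha, a.gcd_dvd_left b⟩,
        mem_filter.2 ⟨hb, a.gcd_dvd_right b⟩⟩
  calc N ^ 2 = #(Ioc 0 N ×ˢ Ioc 0 N) := by simp [sq]
    _ ≤ _ := (card_le_card cover).trans (card_union_le _ _)
    _ ≤ #(coprimePairs N) + ∑ d ∈ Icc 2 N, #({a ∈ Ioc 0 N | d ∣ a} ×ˢ {b ∈ Ioc 0 N | d ∣ b}) :=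
      Nat.add_le_add_left card_biUnion_le _
    _ = #(coprimePairs N) + ∑ d ∈ Icc 2 N, (N / d) ^ 2 := by
      simp only [card_product, Nat.Ioc_filter_dvd_card_eq_div, sq]

lemma sq_div_four_le_card_coprimePairs (N : ℕ) : (N : ℝ) ^ 2 / 4 ≤ #(coprimePairs N) := by
  have cover : (N : ℝ) ^ 2 ≤ #(coprimePairs N) + ∑ d ∈ Icc 2 N, ((N / d : ℕ) : ℝ) ^ 2 :=
    mod_cast sq_le_card_coprimePairs_add_sum N
  have overcount : ∑ d ∈ Icc 2 N, ((N / d : ℕ) : ℝ) ^ 2 ≤ (N : ℝ) ^ 2 * (3 / 4) := calc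
    ∑ d ∈ Icc 2 N, ((N / d : ℕ) : ℝ) ^ 2
      ≤ ∑ d ∈ Icc 2 N, (N : ℝ) ^ 2 * ((d : ℝ) ^ 2)⁻¹ := by
        gcongr with d
        rw [← div_eq_mul_inv, ← div_pow]
        gcongr
        exact Nat.cast_div_le
    _ = (N : ℝ) ^ 2 * ∑ d ∈ Icc 2 N, ((d : ℝ) ^ 2)⁻¹ := (mul_sum _ _ _).symm
    _ ≤ (N : ℝ) ^ 2 * (3 / 4) := by
        gcongr
        exact sum_Icc_two_inv_sq_le N
  linarith

lemma finite_farey (H : ℝ) : (Farey H).Finite := by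
  refine (((Set.finite_Icc (-⌊H⌋) ⌊H⌋).prod (Set.finite_Iic ⌊H⌋₊)).image
    fun p : ℤ × ℕ ↦ (p.1 / p.2 : ℚ)).subset fun x hx ↦ ⟨(x.num, x.den), ⟨?_, ?_⟩, x.num_div_den⟩
  · exact abs_le.1 (Int.le_floor.2 (mod_cast hx.1))
  · exact Nat.le_floor hx.2

lemma zero_mem_farey {H : ℝ} (hH : 1 ≤ H) : 0 ∈ Farey H :=
  ⟨by simpa using zero_le_one.trans hH, by simpa using hH⟩

lemma one_mem_farey {H : ℝ} (hH : 1 ≤ H) : 1 ∈ Farey H :=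
  ⟨by simpa using hH, by simpa using hH⟩

lemma coprimePairs_subset_image_farey {N : ℕ} {H : ℝ} (hN : N ≤ H) :
    (coprimePairs N : Set (ℕ × ℕ)) ⊆ (fun x : ℚ ↦ (x.num.natAbs, x.den)) '' Farey H := by
  rintro ⟨a, b⟩ hab
  simp only [coprimePairs, coe_filter, mem_product, mem_Ioc, Set.mem_ofPred_eq] at hab
  obtain ⟨⟨⟨-, ha⟩, hb_pos, hb⟩, coprime⟩ := hab
  refine ⟨⟨a, b, hb_pos.ne', coprime⟩, ⟨?_, ?_⟩, rfl⟩
  · simpa using (Nat.cast_le.2 ha).trans hN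
  · exact (Nat.cast_le.2 hb).trans hN

lemma sq_div_sixteen_le_ncard_farey {H : ℝ} (hH : 1 ≤ H) : H ^ 2 / 16 ≤ (Farey H).ncard := by
  have half_le_floor : H / 2 ≤ ⌊H⌋₊ := by
    have one_le : (1 : ℝ) ≤ ⌊H⌋₊ := mod_cast Nat.le_floor (by simpa using hH)
    linarith [Nat.lt_floor_add_one H]
  have card_le : #(coprimePairs ⌊H⌋₊) ≤ (Farey H).ncard := calc
    #(coprimePairs ⌊H⌋₊) = (coprimePairs ⌊H⌋₊ : Set (ℕ × ℕ)).ncard := (Set.ncard_coe_finset _).symm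
    _ ≤ _ := Set.ncard_le_ncard (coprimePairs_subset_image_farey (Nat.floor_le (by linarith)))
        ((finite_farey H).image _)
    _ ≤ (Farey H).ncard := Set.ncard_image_le (finite_farey H)
  calc H ^ 2 / 16 = (H / 2) ^ 2 / 4 := by ring
    _ ≤ (⌊H⌋₊ : ℝ) ^ 2 / 4 := by gcongr
    _ ≤ #(coprimePairs ⌊H⌋₊) := sq_div_four_le_card_coprimePairs _
    _ ≤ (Farey H).ncard := mod_cast card_le

end Farey

theorem stmt1_general (m n r : ℕ) (hrm : r ≤ m) (hrn : r ≤ n) :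
    ∃ c : ℝ, c > 0 ∧ ∀ H : ℝ, H ≥ 1 →
      c * H ^ ((2 * n * r : ℕ) : ℝ) ≤
        (Set.ncard {A : Matrix (Fin m) (Fin n) ℚ |
            (∀ i j, A i j ∈ Farey H) ∧ A.rank = r} : ℝ) := by
  refine ⟨(16 ^ (n * r) * 2 ^ r)⁻¹, by positivity, fun H hH ↦ ?_⟩
  set count := Set.ncard {A : Matrix (Fin m) (Fin n) ℚ | (∀ i j, A i j ∈ Farey H) ∧ A.rank = r}
  have farey_nontrivial : (Farey H).Nontrivial :=
    ⟨0, zero_mem_farey hH, 1, one_mem_farey hH, zero_ne_one⟩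
  have ncard_pow_le : (Farey H).ncard ^ (n * r) ≤ 2 ^ r * count := by
    simpa using ncard_pow_le_two_pow_mul_ncard_rank_eq (m := Fin m) (n := Fin n) (finite_farey H)
      farey_nontrivial (zero_mem_farey hH) (by simpa using hrm) (by simpa using hrn)
  rw [Real.rpow_natCast]
  calc (16 ^ (n * r) * 2 ^ r)⁻¹ * H ^ (2 * n * r)
      = (2 ^ r)⁻¹ * (H ^ 2 / 16) ^ (n * r) := by
        rw [div_pow, ← pow_mul, mul_inv, mul_assoc 2]
        ring
    _ ≤ (2 ^ r)⁻¹ * ((Farey H).ncard : ℝ) ^ (n * r) := by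
        gcongr
        exact sq_div_sixteen_le_ncard_farey hH
    _ ≤ (2 ^ r)⁻¹ * (2 ^ r * count) := by
        gcongr
        exact mod_cast ncard_pow_le
    _ = count := inv_mul_cancel_left₀ (by positivity) _

theorem stmt1 (m n r : ℕ) (hnm : n ≥ m) (hmr : m ≥ r) (hr : r ≥ 1) :
    ∃ c : ℝ, c > 0 ∧ ∀ H : ℝ, H ≥ 1 →
      c * H ^ ((2 * n * r : ℕ) : ℝ) ≤
        (Set.ncard {A : Matrix (Fin m) (Fin n) ℚ |
            (∀ i j, A i j ∈ Farey H) ∧ A.rank = r} : ℝ) :=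
  stmt1_general m n r hmr (hmr.trans hnm)
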